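/- The map on words over Fin 8 that replaces every symbol ℓ by 7−ℓ is an involutive bijection from the set of OT-admissible words of length m onto itself. Consequently, for each ℓ ∈ Fin 8 and each m ≥ 1, the number of OT-admissible words of length m whose leftmost symbol equals ℓ is equal to the number of OT-admissible words of length m whose leftmost symbol equals 7−ℓ. -/

import Mathlib

namespace OTLOCO

def B1 : Finset (Fin 8) := {0, 1, 4, 5}
def B2 : Finset (Fin 8) := {2, 3, 6, 7}

def OTpair (a b : Fin 8) : Prop :=
  (a = 2 ∧ b ∈ B1) ∨ (a ∈ B1 ∧ b = 2) ∨ (a = 5 ∧ b ∈ B2) ∨ (a ∈ B2 ∧ b = 5)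

def OTtriple (a x b : Fin 8) : Prop :=
  (a ∈ ({0, 1, 4} : Finset (Fin 8)) ∧ x ∈ ({3, 6} : Finset (Fin 8)) ∧
    b ∈ ({0, 1, 4} : Finset (Fin 8))) ∨
  (a ∈ ({3, 6, 7} : Finset (Fin 8)) ∧ x ∈ ({1, 4} : Finset (Fin 8)) ∧
    b ∈ ({3, 6, 7} : Finset (Fin 8)))

instance (a b : Fin 8) : Decidable (OTpair a b) := by unfold OTpair; infer_instance
instance (a x b : Fin 8) : Decidable (OTtriple a x b) := by unfold OTtriple; infer_instance

/-- A word `w : Fin m → Fin 8` (index `0` is the leftmost symbol) is OT-admissible. -/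
def OTadm {m : ℕ} (w : Fin m → Fin 8) : Prop :=
  (∀ i j : Fin m, (j : ℕ) = (i : ℕ) + 1 → ¬ OTpair (w i) (w j)) ∧
  (∀ i j k : Fin m, (j : ℕ) = (i : ℕ) + 1 → (k : ℕ) = (i : ℕ) + 2 →
    ¬ OTtriple (w i) (w j) (w k))

instance {m : ℕ} : DecidablePred (@OTadm m) := fun w => by
  unfold OTadm; infer_instance

/-- The symbol-wise complement `ℓ ↦ 7 − ℓ`. -/
def complW {m : ℕ} (w : Fin m → Fin 8) : Fin m → Fin 8 :=
  fun i => ⟨7 - (w i).val, by omega⟩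

/-! The complement `ℓ ↦ 7 - ℓ` is the order reversal of `Fin 8`. It exchanges `2` with `5`, `B1`
with `B2`, `{0, 1, 4}` with `{3, 6, 7}` and `{3, 6}` with `{1, 4}`, so it exchanges the two
families of forbidden pairs, and likewise the two families of forbidden triples. -/

theorem mk_seven_sub_eq_rev (a : Fin 8) : (⟨7 - a.val, by omega⟩ : Fin 8) = a.rev := by
  ext
  simp only [Fin.val_rev]
  omega

theorem rev_mem_B1 : ∀ a : Fin 8, a.rev ∈ B1 ↔ a ∈ B2 := by decide

theorem rev_mem_B2 (a : Fin 8) : a.rev ∈ B2 ↔ a ∈ B1 := by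
  rw [← rev_mem_B1, Fin.rev_rev]

theorem OTpair_rev (a b : Fin 8) : OTpair a.rev b.rev ↔ OTpair a b := by
  have rev_eq_two (c : Fin 8) : c.rev = 2 ↔ c = 5 := Fin.rev_eq_iff
  have rev_eq_five (c : Fin 8) : c.rev = 5 ↔ c = 2 := Fin.rev_eq_iff
  simp only [OTpair, rev_mem_B1, rev_mem_B2, rev_eq_two, rev_eq_five]
  tauto

theorem OTtriple_rev (a x b : Fin 8) : OTtriple a.rev x.rev b.rev ↔ OTtriple a x b := by
  have rev_mem_014 : ∀ c : Fin 8,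
      c.rev ∈ ({0, 1, 4} : Finset (Fin 8)) ↔ c ∈ ({3, 6, 7} : Finset (Fin 8)) := by decide
  have rev_mem_367 (c : Fin 8) :
      c.rev ∈ ({3, 6, 7} : Finset (Fin 8)) ↔ c ∈ ({0, 1, 4} : Finset (Fin 8)) := by
    rw [← rev_mem_014, Fin.rev_rev]
  have rev_mem_36 : ∀ c : Fin 8,
      c.rev ∈ ({3, 6} : Finset (Fin 8)) ↔ c ∈ ({1, 4} : Finset (Fin 8)) := by decide
  have rev_mem_14 (c : Fin 8) :
      c.rev ∈ ({1, 4} : Finset (Fin 8)) ↔ c ∈ ({3, 6} : Finset (Fin 8)) := by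
    rw [← rev_mem_36, Fin.rev_rev]
  simp only [OTtriple, rev_mem_014, rev_mem_367, rev_mem_36, rev_mem_14]
  exact or_comm

section Words

variable {m : ℕ}

theorem complW_apply (w : Fin m → Fin 8) (i : Fin m) : complW w i = (w i).rev :=
  mk_seven_sub_eq_rev (w i)

theorem complW_involutive : Function.Involutive (@complW m) := by
  intro w
  ext1 i
  rw [complW_apply, complW_apply, Fin.rev_rev]

theorem OTadm_complW (w : Fin m → Fin 8) : OTadm (complW w) ↔ OTadm w := by
  simp only [OTadm, complW_apply, OTpair_rev, OTtriple_rev]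

theorem card_OTadm_apply_eq_rev (i : Fin m) (ℓ : Fin 8) :
    (Finset.univ.filter fun w : Fin m → Fin 8 => OTadm w ∧ w i = ℓ).card =
      (Finset.univ.filter fun w : Fin m → Fin 8 => OTadm w ∧ w i = ℓ.rev).card := by
  refine Finset.card_equiv complW_involutive.toPerm fun w => ?_
  simp only [Finset.mem_filter_univ, Function.Involutive.coe_toPerm, OTadm_complW,
    complW_apply, Fin.rev_inj]

end Words

theorem compl_involutive_preserves_admissible_and_counts (m : ℕ) :
    Function.Involutive (@complW m) ∧
    (∀ w : Fin m → Fin 8, OTadm (complW w) ↔ OTadm w) ∧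
    (∀ (h : 1 ≤ m) (ℓ : Fin 8),
      (Finset.univ.filter (fun w : Fin m → Fin 8 =>
          OTadm w ∧ w ⟨0, h⟩ = ℓ)).card =
      (Finset.univ.filter (fun w : Fin m → Fin 8 =>
          OTadm w ∧ w ⟨0, h⟩ = ⟨7 - ℓ.val, by omega⟩)).card) := by
  refine ⟨complW_involutive, OTadm_complW, fun h ℓ => ?_⟩
  rw [mk_seven_sub_eq_rev]
  exact card_OTadm_apply_eq_rev ⟨0, h⟩ ℓ

end OTLOCO
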